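/- Suppose Γ is a configuration satisfying the Working Conditions with at least one bad vertex, let φ be an embedding of Γ into ℤ^N, let x be a bad vertex with neighbors u_1 and u_2, and suppose the restriction of φ to the vertices of the extended bad part is semi-standard at x. Then for every basis vector e with e ∈ supp(φ(u_1)) ∩ supp(φ(u_2)) and e ∉ supp(φ(x)), and every vertex v with v ∉ {u_1, u_2}, we have e ∉ supp(φ(v)). -/

import Mathlib

namespace LensPaper

/-- A finite weighted simple graph: the combinatorial data underlying a configuration
(a disjoint union of weighted linear graphs).  The fact that every connected component
is a path is recorded separately by `Config.IsLinear`. -/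
structure Config where
  V : Type
  fin : Fintype V
  deq : DecidableEq V
  graph : SimpleGraph V
  adjDec : DecidableRel graph.Adj
  w : V → ℤ

attribute [instance] Config.fin Config.deq Config.adjDec

namespace Config

/-- The degree of a vertex. -/
noncomputable def deg (C : Config) (v : C.V) : ℕ := (C.graph.neighborSet v).ncard

/-- A configuration: every component is a path, i.e. all degrees are at most `2` and the
graph is acyclic. -/
def IsLinear (C : Config) : Prop :=
  (∀ v : C.V, C.deg v ≤ 2) ∧ C.graph.IsAcyclic

/-- The adjusted weight `w'(v) = w(v) - deg(v)`. -/
noncomputable def adjw (C : Config) (v : C.V) : ℤ := C.w v - C.deg v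

/-- A vertex is bad if it is adjacent to two distinct vertices of positive adjusted
weight. -/
def IsBad (C : Config) (x : C.V) : Prop :=
  ∃ u v : C.V, u ≠ v ∧ C.graph.Adj x u ∧ C.graph.Adj x v ∧ 0 < C.adjw u ∧ 0 < C.adjw v

/-- A leaf: a vertex of degree at most one. -/
def IsLeaf (C : Config) (v : C.V) : Prop := C.deg v ≤ 1

/-- `v 0, v 1, …, v m` is a chain of consecutive (distinct) vertices. -/
def IsChain (C : Config) (m : ℕ) (v : ℕ → C.V) : Prop :=
  (∀ i ≤ m, ∀ j ≤ m, v i = v j → i = j) ∧ ∀ i < m, C.graph.Adj (v i) (v (i + 1))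

/-- The chain `v 0, …, v m` has the list `p` as its sequence of adjusted weights. -/
def ChainPattern (C : Config) (m : ℕ) (v : ℕ → C.V) (p : List ℤ) : Prop :=
  C.IsChain m v ∧ m + 1 = p.length ∧ ∀ i : Fin p.length, C.adjw (v i) = p.get i

/-- `Γ` contains a chain of consecutive vertices whose adjusted weights, read in order,
form the list `p`. -/
def HasPattern (C : Config) (p : List ℤ) : Prop := ∃ m v, C.ChainPattern m v p

/-- A chain realizing a bad-part pattern `p` (each entry of `p` is an adjusted weight
together with a flag marking the bad positions): the chain has the prescribed adjusted
weights, and the bad vertices of the configuration are exactly the vertices of the chain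
in the flagged positions. -/
def IsBadPartChain (C : Config) (p : List (ℤ × Bool)) (m : ℕ) (v : ℕ → C.V) : Prop :=
  C.IsChain m v ∧ m + 1 = p.length ∧
  (∀ i : Fin p.length, C.adjw (v i) = (p.get i).1) ∧
  (∀ x : C.V, C.IsBad x ↔ ∃ i : Fin p.length, (p.get i).2 = true ∧ v i = x)

end Config

/-- The chains of adjusted weights forbidden by Working Condition VI. -/
def forbiddenPatterns : List (List ℤ) :=
  [[1, 0, 0, 2], [1, 0, 0, 3], [1, 0, 0, 0, 3], [1, 1, 0, 0, 1, 2], [3, 1, 0, 0, 1],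
   [1, 0, 1, 2], [1, 0, 1, 3], [1, 1, 0, 2], [1, 1, 0, 1, 1, 2]]

/-- The bad-part patterns of Working Condition VII; `true` marks the bad positions. -/
def badPatterns : List (List (ℤ × Bool)) :=
  [[(1, false), (0, true), (1, false)],
   [(1, false), (0, true), (2, false)],
   [(1, false), (0, true), (3, false)],
   [(1, false), (1, true), (1, false)],
   [(1, false), (1, true), (2, false)],
   [(1, false), (2, true), (1, false)],
   [(1, false), (0, true), (1, false), (0, true), (1, false)],
   [(1, false), (0, true), (1, false), (0, true), (2, false)],
   [(1, false), (0, true), (1, false), (1, true), (1, false)],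
   [(1, false), (0, true), (1, false), (1, true), (2, false)],
   [(1, false), (1, true), (1, true), (1, false)],
   [(1, false), (1, true), (1, true), (1, true), (1, false)],
   [(1, false), (1, true), (2, true), (1, false)]]

namespace Config

/-- The Working Conditions (I)–(VII). -/
def WorkingConditions (C : Config) : Prop :=
  (∀ v : C.V, 2 ≤ C.w v) ∧
  (∀ v : C.V, C.adjw v ≤ 3) ∧
  (∀ u v : C.V, 1 < C.adjw u → 1 < C.adjw v → u = v) ∧
  (∀ v x : C.V, 1 < C.adjw v → C.IsBad x → C.adjw x = 1 → C.graph.Adj x v) ∧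
  ((∃ v : C.V, C.adjw v = 3) →
     ∀ u u' : C.V, C.graph.Adj u u' → C.adjw u = 1 → C.adjw u' = 1 → False) ∧
  (∀ u v x : C.V, C.graph.Adj u v → C.adjw u = 1 → C.adjw v = 1 →
     C.IsBad x → C.adjw x = 2 → C.graph.Adj x u ∨ C.graph.Adj x v) ∧
  (∀ p ∈ forbiddenPatterns, ¬ C.HasPattern p) ∧
  ((∃ x : C.V, C.IsBad x) → ∃ p ∈ badPatterns, ∃ m v, C.IsBadPartChain p m v)

end Config

/-- The standard inner product on `ℤ^N`. -/
def dot {N : ℕ} (x y : Fin N → ℤ) : ℤ := ∑ i, x i * y i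

/-- The support of a vector of `ℤ^N` with respect to the standard orthonormal basis. -/
def supp {N : ℕ} (x : Fin N → ℤ) : Finset (Fin N) :=
  Finset.univ.filter fun i => x i ≠ 0

namespace Config

/-- An embedding of a configuration into `ℤ^N`. -/
def IsEmbedding (C : Config) (N : ℕ) (φ : C.V → Fin N → ℤ) : Prop :=
  ∀ u v : C.V, dot (φ u) (φ v) =
    if u = v then C.w u else if C.graph.Adj u v then -1 else 0

/-- The restriction of `φ` to `S` is standard. -/
def IsStandardOn (C : Config) (N : ℕ) (φ : C.V → Fin N → ℤ) (S : Set C.V) : Prop :=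
  ∀ u ∈ S, ∀ v ∈ S,
    ((supp (φ u) ∩ supp (φ v)).card : ℤ) =
      if u = v then C.w v else if C.graph.Adj u v then 1 else 0

/-- A standard embedding. -/
def IsStandard (C : Config) (N : ℕ) (φ : C.V → Fin N → ℤ) : Prop :=
  C.IsStandardOn N φ Set.univ

/-- The restriction of `φ` to `S` is semi-standard at `x`. -/
def IsSemiStandardAtOn (C : Config) (N : ℕ) (φ : C.V → Fin N → ℤ) (x : C.V)
    (S : Set C.V) : Prop :=
  (∀ u ∈ S, ∀ v ∈ S,
    ((supp (φ u) ∩ supp (φ v)).card : ℤ) =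
      if u = v then C.w v
      else if C.graph.Adj u v then 1
      else if C.graph.Adj x u ∧ C.graph.Adj x v then 2
      else 0) ∧
  (∀ u ∈ S, ∀ v ∈ S, u ≠ v → C.graph.Adj x u → C.graph.Adj x v →
    (supp (φ u) ∩ supp (φ x) ∩ supp (φ v)).card = 1)

/-- A semi-standard embedding: semi-standard at some bad vertex. -/
def IsSemiStandard (C : Config) (N : ℕ) (φ : C.V → Fin N → ℤ) : Prop :=
  ∃ x : C.V, C.IsBad x ∧ C.IsSemiStandardAtOn N φ x Set.univ

/-- A candidate for the extended bad part: a chain containing the bad part whose two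
ends are either leaves or preceded by two consecutive vertices of vanishing adjusted
weight. -/
def IsEBPCand (C : Config) (m : ℕ) (v : ℕ → C.V) : Prop :=
  C.IsChain m v ∧
  (∀ p ∈ badPatterns, ∀ mb vb, C.IsBadPartChain p mb vb →
     ∀ i ≤ mb, ∃ j ≤ m, v j = vb i) ∧
  (C.IsLeaf (v 0) ∨ (2 ≤ m ∧ C.adjw (v 1) = 0 ∧ C.adjw (v 2) = 0)) ∧
  (C.IsLeaf (v m) ∨ (2 ≤ m ∧ C.adjw (v (m - 1)) = 0 ∧ C.adjw (v (m - 2)) = 0))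

/-- The extended bad part: a candidate with the fewest vertices. -/
def IsExtBadPart (C : Config) (m : ℕ) (v : ℕ → C.V) : Prop :=
  C.IsEBPCand m v ∧ ∀ m' v', C.IsEBPCand m' v' → m ≤ m'

/-- The set of vertices of the chain `v 0, …, v m`. -/
def ebpSet (C : Config) (m : ℕ) (v : ℕ → C.V) : Set C.V := {y | ∃ i ≤ m, v i = y}

/-- The outside part of `Γ` relative to the extended bad part `v 0, …, v m`. -/
def OutsidePart (C : Config) (m : ℕ) (v : ℕ → C.V) : Set C.V :=
  {x | ∀ i ≤ m, v i ≠ x}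
  ∪ {x | ¬ C.IsLeaf (v 0) ∧ (x = v 0 ∨ x = v 1 ∨ x = v 2)}
  ∪ {x | ¬ C.IsLeaf (v m) ∧ (x = v m ∨ x = v (m - 1) ∨ x = v (m - 2))}

/-- A screw at the front end of the extended bad part. -/
def IsFrontScrew (C : Config) (N : ℕ) (φ : C.V → Fin N → ℤ) (m : ℕ) (v : ℕ → C.V)
    (e : Fin N) : Prop :=
  ¬ C.IsLeaf (v 0) ∧ 3 ≤ m ∧ φ (v 2) e ≠ 0 ∧ φ (v 3) e ≠ 0

/-- A screw at the back end of the extended bad part. -/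
def IsBackScrew (C : Config) (N : ℕ) (φ : C.V → Fin N → ℤ) (m : ℕ) (v : ℕ → C.V)
    (e : Fin N) : Prop :=
  ¬ C.IsLeaf (v m) ∧ 3 ≤ m ∧ φ (v (m - 2)) e ≠ 0 ∧ φ (v (m - 3)) e ≠ 0

/-- All screws of `Γ` (with respect to `φ`) are clean. -/
def AllScrewsClean (C : Config) (N : ℕ) (φ : C.V → Fin N → ℤ) (m : ℕ)
    (v : ℕ → C.V) : Prop :=
  (∀ e : Fin N, C.IsFrontScrew N φ m v e →
    ∀ u : C.V, u ≠ v 2 → u ≠ v 3 → φ u e = 0) ∧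
  (∀ e : Fin N, C.IsBackScrew N φ m v e →
    ∀ u : C.V, u ≠ v (m - 2) → u ≠ v (m - 3) → φ u e = 0)

end Config

/-!
Let `u` and `u'` be the two neighbours of `x`.  Their supports share exactly two vectors, the
folded vector `e` and a vector `f` in the support of `x`.  Semi-standardness leaves no room for
`e` in any other vertex near `x`, so suppose that `e` lies in the support of a distant vertex `y`,
which is then orthogonal to every vertex close to `x`.  If `f` also lay in the support of `y`,
orthogonality to `u`, `u'` and `x` would force `y · y ≥ 5`, hence `w'(y) > 1` and `w' ≤ 1` near
`x`, and then `y · y ≥ 7`, more than the bounds on degrees and adjusted weights allow.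

Otherwise `y` needs further vectors on each side of `x`: orthogonality to `u` gives a vector `c`
common to `y` and `u`; if `w'(u) ≤ 1`, then `u` must share `c` with its outer neighbour `s`, so
orthogonality to `s` gives a second vector; and if `w'(s) ≤ 0`, the neighbour after `s` gives a
third.  No vector arises on both sides, and the restrictions on adjusted weights greater than `1`
make their number exceed what `y · y ≤ w'(y) + 2` admits.

All of this happens within distance `4` of `x`.  The extended bad part contains that ball because
the neighbours of a bad vertex have positive adjusted weight, while an end of the extended bad part
that is not a leaf is preceded by two vertices of adjusted weight `0`.
-/

section IntegerVectors

variable {N : ℕ} {y z z₁ z₂ : Fin N → ℤ} {e f g : Fin N}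

theorem mem_supp : e ∈ supp z ↔ z e ≠ 0 := by
  simp [supp]

theorem dot_eq_sum_supp (y z : Fin N → ℤ) : dot y z = ∑ i ∈ supp z, y i * z i := by
  refine (Finset.sum_subset (Finset.subset_univ _) fun i _ hi => ?_).symm
  rw [mem_supp, not_not] at hi
  rw [hi, mul_zero]

theorem exists_ne_of_dot_eq_zero (h : dot y z = 0) (hy : y e ≠ 0) (hz : z e ≠ 0) :
    ∃ i, i ≠ e ∧ y i ≠ 0 ∧ z i ≠ 0 := by
  by_contra! hcon
  have hsingle : dot y z = y e * z e :=
    Finset.sum_eq_single_of_mem e (Finset.mem_univ e) fun i _ hi =>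
      mul_eq_zero.2 (or_iff_not_imp_left.2 (hcon i hi))
  exact mul_ne_zero hy hz (hsingle ▸ h)

theorem one_le_sq {a : ℤ} (ha : a ≠ 0) : 1 ≤ a ^ 2 :=
  sq_pos_of_ne_zero ha

theorem sum_sq_le_dot_self (y : Fin N → ℤ) (s : Finset (Fin N)) : ∑ i ∈ s, y i ^ 2 ≤ dot y y := by
  simp only [dot, ← sq]
  exact Finset.sum_le_univ_sum_of_nonneg fun i => sq_nonneg (y i)

theorem card_supp_le_dot_self (y : Fin N → ℤ) : ((supp y).card : ℤ) ≤ dot y y :=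
  calc ((supp y).card : ℤ) = ∑ i ∈ supp y, 1 := by simp
    _ ≤ ∑ i ∈ supp y, y i ^ 2 := Finset.sum_le_sum fun _ hi => one_le_sq (mem_supp.1 hi)
    _ ≤ dot y y := sum_sq_le_dot_self y _

theorem sq_eq_one_of_card_supp_eq_dot_self (h : ((supp z).card : ℤ) = dot z z) (he : z e ≠ 0) :
    z e ^ 2 = 1 := by
  have hsum : ∑ i ∈ supp z, 1 = ∑ i ∈ supp z, z i ^ 2 := by
    simp only [sq, ← dot_eq_sum_supp, ← h, Finset.sum_const, nsmul_eq_mul, mul_one]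
  exact ((Finset.sum_eq_sum_iff_of_le fun _ hi => one_le_sq (mem_supp.1 hi)).1 hsum e
    (mem_supp.2 he)).symm

theorem pair_subset_supp (he : z e ≠ 0) (hf : z f ≠ 0) : {e, f} ⊆ supp z := by
  simp [Finset.insert_subset_iff, mem_supp, he, hf]

theorem sum_supp_sdiff_pair (hef : e ≠ f) (he : z e ≠ 0) (hf : z f ≠ 0) :
    ∑ i ∈ supp z \ {e, f}, y i * z i = dot y z - (y e * z e + y f * z f) := by
  rw [Finset.sum_sdiff_eq_sub (pair_subset_supp he hf), Finset.sum_pair hef, dot_eq_sum_supp]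

theorem abs_le_sum_sq_sdiff_pair (hz : ∀ i, z i ≠ 0 → z i ^ 2 = 1) (hyz : dot y z = 0)
    (hef : e ≠ f) (he : z e ≠ 0) (hf : z f ≠ 0) :
    |y e * z e + y f * z f| ≤ ∑ i ∈ supp z \ {e, f}, y i ^ 2 := by
  have hrest := sum_supp_sdiff_pair (y := y) hef he hf
  rw [← abs_neg, ← zero_sub, ← hyz, ← hrest]
  refine (Finset.abs_sum_le_sum_abs _ _).trans (Finset.sum_le_sum fun i hi => ?_)
  have hzi : |z i| = 1 :=
    (abs_eq zero_le_one).2 (sq_eq_one_iff.1 (hz i (mem_supp.1 (Finset.mem_sdiff.1 hi).1)))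
  rw [abs_mul, hzi, mul_one, ← sq_abs]
  exact Int.le_self_sq _

theorem sq_le_sum_sq_sdiff_pair (hz : ∀ i, z i ≠ 0 → z i ^ 2 = 1) (hyz : dot y z = 0)
    (hef : e ≠ f) (he : z e ≠ 0) (hf : z f ≠ 0) (hcard : (supp z).card ≤ 3) :
    (y e * z e + y f * z f) ^ 2 ≤ ∑ i ∈ supp z \ {e, f}, y i ^ 2 := by
  have hrest := sum_supp_sdiff_pair (y := y) hef he hf
  have hone : (supp z \ {e, f}).card ≤ 1 := by
    rw [Finset.card_sdiff_of_subset (pair_subset_supp he hf), Finset.card_pair hef]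
    omega
  rw [← neg_sq, ← zero_sub, ← hyz, ← hrest]
  calc (∑ i ∈ supp z \ {e, f}, y i * z i) ^ 2
      ≤ (supp z \ {e, f}).card * ∑ i ∈ supp z \ {e, f}, (y i * z i) ^ 2 :=
        sq_sum_le_card_mul_sum_sq
    _ ≤ 1 * ∑ i ∈ supp z \ {e, f}, (y i * z i) ^ 2 := by
        gcongr
        exact_mod_cast hone
    _ = ∑ i ∈ supp z \ {e, f}, y i ^ 2 := by
        rw [one_mul]
        refine Finset.sum_congr rfl fun i hi => ?_
        rw [mul_pow, hz i (mem_supp.1 (Finset.mem_sdiff.1 hi).1), mul_one]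

/-- Two orthogonal vectors with entries in `{-1, 0, 1}` whose supports meet exactly in `{e, f}`:
the shape of the two neighbours of a vertex at which an embedding is semi-standard. -/
structure IsFoldedPair (z₁ z₂ : Fin N → ℤ) (e f : Fin N) : Prop where
  sq_left : ∀ i, z₁ i ≠ 0 → z₁ i ^ 2 = 1
  sq_right : ∀ i, z₂ i ≠ 0 → z₂ i ^ 2 = 1
  ne : e ≠ f
  supp_inter : supp z₁ ∩ supp z₂ = {e, f}
  dot_eq_zero : dot z₁ z₂ = 0

namespace IsFoldedPair

theorem left_ne_zero (h : IsFoldedPair z₁ z₂ e f) : z₁ e ≠ 0 ∧ z₁ f ≠ 0 := by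
  have hsub : {e, f} ⊆ supp z₁ := h.supp_inter ▸ Finset.inter_subset_left
  simpa [Finset.insert_subset_iff, mem_supp] using hsub

theorem right_ne_zero (h : IsFoldedPair z₁ z₂ e f) : z₂ e ≠ 0 ∧ z₂ f ≠ 0 := by
  have hsub : {e, f} ⊆ supp z₂ := h.supp_inter ▸ Finset.inter_subset_right
  simpa [Finset.insert_subset_iff, mem_supp] using hsub

theorem disjoint_sdiff (h : IsFoldedPair z₁ z₂ e f) :
    Disjoint (supp z₁ \ {e, f}) (supp z₂ \ {e, f}) := by
  rw [← h.supp_inter, Finset.disjoint_left]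
  grind

theorem mul_add_mul_eq_zero (h : IsFoldedPair z₁ z₂ e f) : z₁ e * z₂ e + z₁ f * z₂ f = 0 := by
  have hrest := sum_supp_sdiff_pair (y := z₁) h.ne h.right_ne_zero.1 h.right_ne_zero.2
  rw [h.dot_eq_zero, Finset.sum_eq_zero fun i hi => ?_] at hrest
  · linarith
  · have hi₁ : i ∉ supp z₁ \ {e, f} := Finset.disjoint_right.1 h.disjoint_sdiff hi
    have hz₁ : z₁ i = 0 := by
      by_contra hz
      exact hi₁ (Finset.mem_sdiff.2 ⟨mem_supp.2 hz, (Finset.mem_sdiff.1 hi).2⟩)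
    rw [hz₁, zero_mul]

theorem sq_add_sq_eq (h : IsFoldedPair z₁ z₂ e f) (y : Fin N → ℤ) :
    (y e * z₁ e + y f * z₁ f) ^ 2 + (y e * z₂ e + y f * z₂ f) ^ 2 = 2 * (y e ^ 2 + y f ^ 2) := by
  -- `(z₁ e, z₁ f)` and `(z₂ e, z₂ f)` are orthogonal of length `√2`, and so are the columns.
  have hz₁e := h.sq_left e h.left_ne_zero.1
  have hz₁f := h.sq_left f h.left_ne_zero.2
  have hz₂e := h.sq_right e h.right_ne_zero.1
  have hz₂f := h.sq_right f h.right_ne_zero.2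
  have hcross : z₁ e * z₁ f + z₂ e * z₂ f = 0 := by
    linear_combination z₁ f * z₂ e * h.mul_add_mul_eq_zero - z₁ e * z₁ f * hz₂e - z₂ e * z₂ f * hz₁f
  linear_combination y e ^ 2 * (hz₁e + hz₂e) + y f ^ 2 * (hz₁f + hz₂f) + 2 * y e * y f * hcross

theorem sum_sq_lt_dot_self (h : IsFoldedPair z₁ z₂ e f) (hy : y g ≠ 0) (hg₁ : z₁ g = 0)
    (hg₂ : z₂ g = 0) :
    y e ^ 2 + y f ^ 2 + ∑ i ∈ supp z₁ \ {e, f}, y i ^ 2 + ∑ i ∈ supp z₂ \ {e, f}, y i ^ 2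
      < dot y y := by
  have hdisj : Disjoint {e, f} (supp z₁ \ {e, f} ∪ supp z₂ \ {e, f}) :=
    Finset.disjoint_union_right.2 ⟨Finset.disjoint_sdiff, Finset.disjoint_sdiff⟩
  have hg : g ∉ {e, f} ∪ (supp z₁ \ {e, f} ∪ supp z₂ \ {e, f}) := by
    have hge : g ≠ e := by rintro rfl; exact h.left_ne_zero.1 hg₁
    have hgf : g ≠ f := by rintro rfl; exact h.left_ne_zero.2 hg₁
    simp [mem_supp, hg₁, hg₂, hge, hgf]
  have hle := sum_sq_le_dot_self y (insert g ({e, f} ∪ (supp z₁ \ {e, f} ∪ supp z₂ \ {e, f})))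
  rw [Finset.sum_insert hg, Finset.sum_union hdisj, Finset.sum_union h.disjoint_sdiff,
    Finset.sum_pair h.ne] at hle
  linarith [one_le_sq hy]

theorem five_le_dot_self (h : IsFoldedPair z₁ z₂ e f) (hy₁ : dot y z₁ = 0) (hy₂ : dot y z₂ = 0)
    (hye : y e ≠ 0) (hyf : y f ≠ 0) (hyg : y g ≠ 0) (hg₁ : z₁ g = 0) (hg₂ : z₂ g = 0) :
    5 ≤ dot y y := by
  have hb₁ := abs_le_sum_sq_sdiff_pair h.sq_left hy₁ h.ne h.left_ne_zero.1 h.left_ne_zero.2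
  have hb₂ := abs_le_sum_sq_sdiff_pair h.sq_right hy₂ h.ne h.right_ne_zero.1 h.right_ne_zero.2
  have hsq := h.sq_add_sq_eq y
  have hlt := h.sum_sq_lt_dot_self hyg hg₁ hg₂
  set a := y e * z₁ e + y f * z₁ f
  set b := y e * z₂ e + y f * z₂ f
  have hye' := one_le_sq hye
  have hyf' := one_le_sq hyf
  have htwo : 2 ≤ |a| + |b| := by
    by_contra! hcon
    nlinarith [sq_abs a, sq_abs b, abs_nonneg a, abs_nonneg b]
  linarith

theorem seven_le_dot_self (h : IsFoldedPair z₁ z₂ e f) (hy₁ : dot y z₁ = 0) (hy₂ : dot y z₂ = 0)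
    (hc₁ : (supp z₁).card ≤ 3) (hc₂ : (supp z₂).card ≤ 3)
    (hye : y e ≠ 0) (hyf : y f ≠ 0) (hyg : y g ≠ 0) (hg₁ : z₁ g = 0) (hg₂ : z₂ g = 0) :
    7 ≤ dot y y := by
  have hb₁ := sq_le_sum_sq_sdiff_pair h.sq_left hy₁ h.ne h.left_ne_zero.1 h.left_ne_zero.2 hc₁
  have hb₂ := sq_le_sum_sq_sdiff_pair h.sq_right hy₂ h.ne h.right_ne_zero.1 h.right_ne_zero.2 hc₂
  linarith [h.sq_add_sq_eq y, h.sum_sq_lt_dot_self hyg hg₁ hg₂, one_le_sq hye, one_le_sq hyf]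

end IsFoldedPair

end IntegerVectors

section Sides

variable {V : Type*} {G : SimpleGraph V} {x u u' z t : V}

/-- `z` lies on the side of `u` as seen from `x`: some walk from `u` to `z` avoids `x`. -/
def OnSide (G : SimpleGraph V) (x u z : V) : Prop :=
  ∃ p : G.Walk u z, x ∉ p.support

namespace OnSide

theorem of_ne (h : x ≠ u) : OnSide G x u u :=
  ⟨.nil, by simpa using h⟩

theorem ne (h : OnSide G x u z) : z ≠ x := by
  obtain ⟨p, hp⟩ := h
  rintro rfl
  exact hp p.end_mem_support

theorem symm (h : OnSide G x u z) : OnSide G x z u := by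
  obtain ⟨p, hp⟩ := h
  exact ⟨p.reverse, by simpa using hp⟩

theorem trans (h : OnSide G x u z) (h' : OnSide G x z t) : OnSide G x u t := by
  obtain ⟨p, hp⟩ := h
  obtain ⟨q, hq⟩ := h'
  exact ⟨p.append q, by simp [SimpleGraph.Walk.mem_support_append_iff, hp, hq]⟩

theorem of_adj (h : G.Adj u z) (hu : u ≠ x) (hz : z ≠ x) : OnSide G x u z :=
  ⟨h.toWalk, by simp [hu.symm, hz.symm]⟩

theorem eq_of_adj (h : OnSide G x u z) (hG : G.IsAcyclic) (hu : G.Adj x u) (hz : G.Adj x z) :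
    z = u := by
  classical
  obtain ⟨p, hp⟩ := h
  have hxp : x ∉ p.bypass.support := fun hx => hp (p.support_bypass_subset_support hx)
  have hlong : (SimpleGraph.Walk.cons hu p.bypass).IsPath := p.bypass_isPath.cons hxp
  simpa using hG.eq_snd_of_adj_start hlong hz (SimpleGraph.Walk.end_mem_support _)

end OnSide

theorem not_adj_of_adj_of_adj (hG : G.IsAcyclic) (hux : G.Adj u x) (hxz : G.Adj x z) :
    ¬ G.Adj u z := fun huz =>
  huz.ne' ((OnSide.of_adj huz hux.ne hxz.ne').eq_of_adj hG hux.symm hxz)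

end Sides

namespace Config

variable {C : Config} {N : ℕ} {φ : C.V → Fin N → ℤ} {S : Set C.V} {x z z' a b : C.V}
  {c d : Fin N}

theorem exists_adj_ne_of_two_le_deg (h : 2 ≤ C.deg z) (a : C.V) :
    ∃ t, C.graph.Adj z t ∧ t ≠ a :=
  Set.exists_ne_of_one_lt_ncard h a

theorem two_le_deg (ha : C.graph.Adj z a) (hb : C.graph.Adj z b) (hab : a ≠ b) :
    2 ≤ C.deg z :=
  (Set.one_lt_ncard_iff (Set.toFinite _)).2 ⟨a, b, ha, hb, hab⟩

theorem eq_or_eq_of_adj (hz : C.deg z ≤ 2) (ha : C.graph.Adj z a) (hb : C.graph.Adj z b)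
    (hab : a ≠ b) {t : C.V} (ht : C.graph.Adj z t) : t = a ∨ t = b := by
  have hsub : {a, b} ⊆ C.graph.neighborSet z := Set.pair_subset ha hb
  have heq : {a, b} = C.graph.neighborSet z :=
    Set.eq_of_subset_of_ncard_le hsub (by rwa [Set.ncard_pair hab]) (Set.toFinite _)
  simpa [← heq] using (C.graph.mem_neighborSet z t).2 ht

theorem IsLeaf.eq_of_adj (hz : C.IsLeaf z) (ha : C.graph.Adj z a) (hb : C.graph.Adj z b) :
    a = b := by
  by_contra hab
  have hdeg := two_le_deg ha hb hab
  unfold IsLeaf at hz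
  omega

theorem IsLinear.w_le (hlin : C.IsLinear) (z : C.V) : C.w z ≤ C.adjw z + 2 := by
  have hdeg := hlin.1 z
  unfold adjw
  omega

theorem IsEmbedding.dot_self (hφ : C.IsEmbedding N φ) (z : C.V) :
    dot (φ z) (φ z) = C.w z := by
  rw [hφ, if_pos rfl]

theorem IsEmbedding.dot_eq_zero (hφ : C.IsEmbedding N φ) (hne : z ≠ z')
    (hadj : ¬ C.graph.Adj z z') : dot (φ z) (φ z') = 0 := by
  rw [hφ, if_neg hne, if_neg hadj]

namespace IsSemiStandardAtOn

theorem card_supp (h : C.IsSemiStandardAtOn N φ x S) (hz : z ∈ S) :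
    ((supp (φ z)).card : ℤ) = C.w z := by
  simpa using h.1 z hz z hz

theorem card_supp_inter_of_adj (h : C.IsSemiStandardAtOn N φ x S) (hz : z ∈ S) (hz' : z' ∈ S)
    (hadj : C.graph.Adj z z') : (supp (φ z) ∩ supp (φ z')).card = 1 := by
  have hcard := h.1 z hz z' hz'
  rw [if_neg hadj.ne, if_pos hadj] at hcard
  exact_mod_cast hcard

theorem exists_of_adj (h : C.IsSemiStandardAtOn N φ x S) (hz : z ∈ S) (hz' : z' ∈ S)
    (hadj : C.graph.Adj z z') : ∃ c, φ z c ≠ 0 ∧ φ z' c ≠ 0 := by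
  obtain ⟨c, hc⟩ := Finset.card_pos.1 (h.card_supp_inter_of_adj hz hz' hadj ▸ Nat.one_pos)
  exact ⟨c, by simpa [mem_supp] using hc⟩

theorem eq_of_adj (h : C.IsSemiStandardAtOn N φ x S) (hz : z ∈ S) (hz' : z' ∈ S)
    (hadj : C.graph.Adj z z') (hc : φ z c ≠ 0) (hc' : φ z' c ≠ 0) (hd : φ z d ≠ 0)
    (hd' : φ z' d ≠ 0) : c = d :=
  Finset.card_le_one.1 (h.card_supp_inter_of_adj hz hz' hadj).le c (by simp [mem_supp, hc, hc'])
    d (by simp [mem_supp, hd, hd'])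

theorem adj_or_adj_and_adj (h : C.IsSemiStandardAtOn N φ x S) (hz : z ∈ S) (hz' : z' ∈ S)
    (hne : z ≠ z') (hc : φ z c ≠ 0) (hc' : φ z' c ≠ 0) :
    C.graph.Adj z z' ∨ C.graph.Adj x z ∧ C.graph.Adj x z' := by
  by_contra! hcon
  have hcard := h.1 z hz z' hz'
  rw [if_neg hne, if_neg hcon.1, if_neg fun hx => hcon.2 hx.1 hx.2] at hcard
  have hempty : supp (φ z) ∩ supp (φ z') = ∅ := Finset.card_eq_zero.1 (by exact_mod_cast hcard)
  exact Finset.notMem_empty c (hempty ▸ by simp [mem_supp, hc, hc'])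

theorem sq_eq_one (h : C.IsSemiStandardAtOn N φ x S) (hφ : C.IsEmbedding N φ) (hz : z ∈ S)
    (hc : φ z c ≠ 0) : φ z c ^ 2 = 1 :=
  sq_eq_one_of_card_supp_eq_dot_self (by rw [h.card_supp hz, hφ.dot_self]) hc

theorem supp_eq_pair (h : C.IsSemiStandardAtOn N φ x S) (hlin : C.IsLinear) (hz : z ∈ S)
    (hadjw : C.adjw z ≤ 0) (hcd : c ≠ d) (hc : φ z c ≠ 0) (hd : φ z d ≠ 0) :
    supp (φ z) = {c, d} := by
  refine (Finset.eq_of_subset_of_card_le (pair_subset_supp hc hd) ?_).symm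
  have hcard := h.card_supp hz
  have hw := hlin.w_le z
  rw [Finset.card_pair hcd]
  omega

end IsSemiStandardAtOn

end Config

/-- The local picture at a vertex `x` where `φ` is semi-standard: `x` has the two neighbours `u`
and `u'`, whose supports share the folded vector `e`, absent from `x`, and the vector `f`, present
in `x`.  Semi-standardness is required on a set `S` containing the ball of radius `4` around
`x`, which stands in for the extended bad part. -/
structure IsFold (C : Config) {N : ℕ} (φ : C.V → Fin N → ℤ) (S : Set C.V) (x u u' : C.V)
    (e f : Fin N) : Prop where
  lin : C.IsLinear
  emb : C.IsEmbedding N φ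
  semi : C.IsSemiStandardAtOn N φ x S
  ball : ∀ ⦃z⦄ (p : C.graph.Walk x z), p.length ≤ 4 → z ∈ S
  adj : C.graph.Adj x u
  adj' : C.graph.Adj x u'
  ne : u ≠ u'
  e_left : φ u e ≠ 0
  e_right : φ u' e ≠ 0
  e_mid : φ x e = 0
  f_left : φ u f ≠ 0
  f_right : φ u' f ≠ 0
  f_mid : φ x f ≠ 0

namespace IsFold

variable {C : Config} {N : ℕ} {φ : C.V → Fin N → ℤ} {S : Set C.V} {x u u' y z z' s t : C.V}
  {e f c c' : Fin N}

theorem symm (h : IsFold C φ S x u u' e f) : IsFold C φ S x u' u e f where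
  lin := h.lin
  emb := h.emb
  semi := h.semi
  ball := h.ball
  adj := h.adj'
  adj' := h.adj
  ne := h.ne.symm
  e_left := h.e_right
  e_right := h.e_left
  e_mid := h.e_mid
  f_left := h.f_right
  f_right := h.f_left
  f_mid := h.f_mid

theorem mid_mem (h : IsFold C φ S x u u' e f) : x ∈ S :=
  h.ball .nil (by simp)

theorem left_mem (h : IsFold C φ S x u u' e f) : u ∈ S :=
  h.ball h.adj.toWalk (by simp)

theorem e_ne_f (h : IsFold C φ S x u u' e f) : e ≠ f := by
  rintro rfl
  exact h.f_mid h.e_mid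

theorem not_adj_left_right (h : IsFold C φ S x u u' e f) : ¬ C.graph.Adj u u' :=
  not_adj_of_adj_of_adj h.lin.2 h.adj.symm h.adj'

theorem supp_inter (h : IsFold C φ S x u u' e f) : supp (φ u) ∩ supp (φ u') = {e, f} := by
  have hcard := h.semi.1 u h.left_mem u' h.symm.left_mem
  rw [if_neg h.ne, if_neg h.not_adj_left_right, if_pos ⟨h.adj, h.adj'⟩] at hcard
  refine (Finset.eq_of_subset_of_card_le ?_ ?_).symm
  · exact Finset.subset_inter (pair_subset_supp h.e_left h.f_left)
      (pair_subset_supp h.e_right h.f_right)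
  · rw [Finset.card_pair h.e_ne_f]
    exact_mod_cast hcard.le

theorem isFoldedPair (h : IsFold C φ S x u u' e f) : IsFoldedPair (φ u) (φ u') e f where
  sq_left _ := h.semi.sq_eq_one h.emb h.left_mem
  sq_right _ := h.semi.sq_eq_one h.emb h.symm.left_mem
  ne := h.e_ne_f
  supp_inter := h.supp_inter
  dot_eq_zero := h.emb.dot_eq_zero h.ne h.not_adj_left_right

theorem apply_eq_zero_of_mem (h : IsFold C φ S x u u' e f) (hz : z ∈ S) (hzu : z ≠ u)
    (hzu' : z ≠ u') : φ z e = 0 := by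
  by_contra hze
  have hzx : z ≠ x := by rintro rfl; exact hze h.e_mid
  have hxz : ¬ C.graph.Adj x z := fun hxz =>
    (Config.eq_or_eq_of_adj (h.lin.1 x) h.adj h.adj' h.ne hxz).elim hzu hzu'
  have hadj : C.graph.Adj z u := (h.semi.adj_or_adj_and_adj hz h.left_mem hzu hze h.e_left)
    |>.resolve_right fun hx => hxz hx.1
  have hadj' : C.graph.Adj z u' := (h.semi.adj_or_adj_and_adj hz h.symm.left_mem hzu' hze h.e_right)
    |>.resolve_right fun hx => hxz hx.1
  have hside : OnSide C.graph x u u' :=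
    (OnSide.of_adj hadj.symm h.adj.ne' hzx).trans (.of_adj hadj' hzx h.adj'.ne')
  exact h.ne (hside.eq_of_adj h.lin.2 h.adj h.adj').symm

theorem dot_eq_zero (h : IsFold C φ S x u u' e f) (hy : y ∉ S) (p : C.graph.Walk x z)
    (hp : p.length ≤ 3) : dot (φ y) (φ z) = 0 := by
  refine h.emb.dot_eq_zero (fun hyz => hy (hyz ▸ h.ball p (by omega))) fun hadj => hy ?_
  exact h.ball (p.concat hadj.symm) (by rw [SimpleGraph.Walk.length_concat]; omega)

theorem dot_left (h : IsFold C φ S x u u' e f) (hy : y ∉ S) : dot (φ y) (φ u) = 0 :=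
  h.dot_eq_zero hy h.adj.toWalk (by simp)

theorem dot_mid (h : IsFold C φ S x u u' e f) (hy : y ∉ S) : dot (φ y) (φ x) = 0 :=
  h.dot_eq_zero hy .nil (by simp)

theorem apply_f_eq_zero (h : IsFold C φ S x u u' e f) (hle : ∀ z, C.adjw z ≤ 3)
    (huniq : ∀ z z', 1 < C.adjw z → 1 < C.adjw z' → z = z') (hy : y ∉ S) (hye : φ y e ≠ 0) :
    φ y f = 0 := by
  by_contra hyf
  obtain ⟨g, hgf, hyg, hxg⟩ := exists_ne_of_dot_eq_zero (h.dot_mid hy) hyf h.f_mid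
  have hug : φ u g = 0 := by
    by_contra hug
    exact hgf (h.semi.eq_of_adj h.mid_mem h.left_mem h.adj hxg hug h.f_mid h.f_left)
  have hug' : φ u' g = 0 := by
    by_contra hug'
    exact hgf (h.semi.eq_of_adj h.mid_mem h.symm.left_mem h.adj' hxg hug' h.f_mid h.f_right)
  have hwy := h.lin.w_le y
  have hlarge : 1 < C.adjw y := by
    have hfive := h.isFoldedPair.five_le_dot_self (h.dot_left hy) (h.symm.dot_left hy) hye hyf hyg
      hug hug'
    rw [h.emb.dot_self] at hfive
    omega
  have hcard : ∀ z ∈ S, (supp (φ z)).card ≤ 3 := by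
    intro z hz
    have hwz := h.lin.w_le z
    have hcz := h.semi.card_supp hz
    have hsmall : ¬ 1 < C.adjw z := fun hz' => hy (huniq y z hlarge hz' ▸ hz)
    omega
  have hseven := h.isFoldedPair.seven_le_dot_self (h.dot_left hy) (h.symm.dot_left hy)
    (hcard u h.left_mem) (hcard u' h.symm.left_mem) hye hyf hyg hug hug'
  rw [h.emb.dot_self] at hseven
  linarith [hle y]

theorem eq_left_of_onSide (h : IsFold C φ S x u u' e f) (hz : z ∈ S) (hz' : z' ∈ S)
    (hside : OnSide C.graph x u z) (hside' : OnSide C.graph x u' z') (hc : φ z c ≠ 0)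
    (hc' : φ z' c ≠ 0) : z = u := by
  have hsep : ¬ OnSide C.graph x z z' := fun hzz' =>
    h.ne ((hside.trans hzz').trans hside'.symm |>.eq_of_adj h.lin.2 h.adj h.adj').symm
  have hne : z ≠ z' := by
    rintro rfl
    exact hsep (.of_ne hside.ne.symm)
  have hadj : ¬ C.graph.Adj z z' := fun hadj => hsep (.of_adj hadj hside.ne hside'.ne)
  have hx := (h.semi.adj_or_adj_and_adj hz hz' hne hc hc').resolve_left hadj
  exact hside.eq_of_adj h.lin.2 h.adj hx.1

theorem apply_eq_zero_of_onSide (h : IsFold C φ S x u u' e f) (hz : z ∈ S)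
    (hside : OnSide C.graph x u z) (hzu : z ≠ u) (hc : φ u' c ≠ 0) : φ z c = 0 := by
  by_contra hzc
  exact hzu (h.eq_left_of_onSide hz h.symm.left_mem hside (.of_ne h.adj'.ne) hzc hc)

open Classical in
/-- The basis vectors other than `e` that `y` shares with the vertices of `S` on the side of `u`
as seen from `x`. -/
noncomputable def sideSupp (φ : C.V → Fin N → ℤ) (S : Set C.V) (x u : C.V) (e : Fin N)
    (y : C.V) : Finset (Fin N) :=
  {c ∈ supp (φ y) | c ≠ e ∧ ∃ z ∈ S, OnSide C.graph x u z ∧ φ z c ≠ 0}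

theorem mem_sideSupp : c ∈ sideSupp φ S x u e y ↔
    φ y c ≠ 0 ∧ c ≠ e ∧ ∃ z ∈ S, OnSide C.graph x u z ∧ φ z c ≠ 0 := by
  simp [sideSupp, mem_supp]

theorem disjoint_sideSupp (h : IsFold C φ S x u u' e f) (hyf : φ y f = 0) :
    Disjoint (sideSupp φ S x u e y) (sideSupp φ S x u' e y) := by
  rw [Finset.disjoint_left]
  intro c hc hc'
  obtain ⟨hyc, hce, z, hz, hside, hzc⟩ := mem_sideSupp.1 hc
  obtain ⟨-, -, z', hz', hside', hzc'⟩ := mem_sideSupp.1 hc'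
  obtain rfl := h.eq_left_of_onSide hz hz' hside hside' hzc hzc'
  obtain rfl := h.symm.eq_left_of_onSide hz' hz hside' hside hzc' hzc
  have hmem : c ∈ ({e, f} : Finset (Fin N)) := by
    rw [← h.supp_inter]
    simp [mem_supp, hzc, hzc']
  rcases Finset.mem_insert.1 hmem with rfl | hcf
  · exact hce rfl
  · exact hyc (Finset.mem_singleton.1 hcf ▸ hyf)

theorem card_sideSupp_add_lt (h : IsFold C φ S x u u' e f) (hye : φ y e ≠ 0) (hyf : φ y f = 0) :
    ((sideSupp φ S x u e y).card : ℤ) + (sideSupp φ S x u' e y).card < C.w y := by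
  have hsub : sideSupp φ S x u e y ∪ sideSupp φ S x u' e y ⊂ supp (φ y) := by
    refine (Finset.ssubset_iff_of_subset fun c hc => ?_).2 ⟨e, mem_supp.2 hye, fun he => ?_⟩
    · rcases Finset.mem_union.1 hc with hc | hc <;> exact mem_supp.2 (mem_sideSupp.1 hc).1
    · rcases Finset.mem_union.1 he with he | he <;> exact (mem_sideSupp.1 he).2.1 rfl
  have hlt := Finset.card_lt_card hsub
  rw [Finset.card_union_of_disjoint (h.disjoint_sideSupp hyf)] at hlt
  have hle := card_supp_le_dot_self (φ y)
  rw [h.emb.dot_self] at hle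
  omega

theorem exists_left_common (h : IsFold C φ S x u u' e f) (hy : y ∉ S) (hye : φ y e ≠ 0) :
    ∃ c, c ∈ sideSupp φ S x u e y ∧ φ u c ≠ 0 := by
  obtain ⟨c, hce, hyc, huc⟩ := exists_ne_of_dot_eq_zero (h.dot_left hy) hye h.e_left
  exact ⟨c, mem_sideSupp.2 ⟨hyc, hce, u, h.left_mem, .of_ne h.adj.ne, huc⟩, huc⟩

theorem one_le_card_sideSupp (h : IsFold C φ S x u u' e f) (hy : y ∉ S) (hye : φ y e ≠ 0) :
    1 ≤ (sideSupp φ S x u e y).card := by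
  obtain ⟨c, hc, -⟩ := h.exists_left_common hy hye
  exact Finset.card_pos.2 ⟨c, hc⟩

theorem triple_subset_supp_left (h : IsFold C φ S x u u' e f) (huc : φ u c ≠ 0) :
    {c, e, f} ⊆ supp (φ u) := by
  simp [Finset.insert_subset_iff, mem_supp, huc, h.e_left, h.f_left]

theorem card_triple (h : IsFold C φ S x u u' e f) (hyf : φ y f = 0)
    (hc : c ∈ sideSupp φ S x u e y) : ({c, e, f} : Finset (Fin N)).card = 3 := by
  obtain ⟨hyc, hce, -⟩ := mem_sideSupp.1 hc
  have hcf : c ≠ f := by rintro rfl; exact hyc hyf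
  exact Finset.card_eq_three.2 ⟨c, e, f, hce, hcf, h.e_ne_f, rfl⟩

theorem three_le_w_left (h : IsFold C φ S x u u' e f) (hy : y ∉ S) (hye : φ y e ≠ 0)
    (hyf : φ y f = 0) : 3 ≤ C.w u := by
  obtain ⟨c, hc, huc⟩ := h.exists_left_common hy hye
  have hle := Finset.card_le_card (h.triple_subset_supp_left huc)
  rw [h.card_triple hyf hc] at hle
  have hcard := h.semi.card_supp h.left_mem
  omega

theorem exists_next_common (h : IsFold C φ S x u u' e f) (hy : y ∉ S) (p : C.graph.Walk x z)
    (hp : p.length ≤ 3) (hside : OnSide C.graph x u z) (hzu : z ≠ u)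
    (hc : c ∈ sideSupp φ S x u e y) (hzc : φ z c ≠ 0) :
    ∃ c' ∈ sideSupp φ S x u e y, c' ≠ c ∧ φ z c' ≠ 0 := by
  have hz : z ∈ S := h.ball p (by omega)
  obtain ⟨c', hc'c, hyc', hzc'⟩ :=
    exists_ne_of_dot_eq_zero (h.dot_eq_zero hy p hp) (mem_sideSupp.1 hc).1 hzc
  have hc'e : c' ≠ e := by
    rintro rfl
    exact hzc' (h.apply_eq_zero_of_onSide hz hside hzu h.e_right)
  exact ⟨c', mem_sideSupp.2 ⟨hyc', hc'e, z, hz, hside, hzc'⟩, hc'c, hzc'⟩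

theorem supp_left_eq (h : IsFold C φ S x u u' e f) (hyf : φ y f = 0) (hu : C.adjw u ≤ 1)
    (hc : c ∈ sideSupp φ S x u e y) (huc : φ u c ≠ 0) : supp (φ u) = {c, e, f} := by
  refine (Finset.eq_of_subset_of_card_le (h.triple_subset_supp_left huc) ?_).symm
  have hcardu := h.semi.card_supp h.left_mem
  have hwu := h.lin.w_le u
  rw [h.card_triple hyf hc]
  omega

theorem exists_second_common (h : IsFold C φ S x u u' e f) (hy : y ∉ S) (hye : φ y e ≠ 0)
    (hyf : φ y f = 0) (hu : C.adjw u ≤ 1) :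
    ∃ s, C.graph.Adj u s ∧ s ≠ x ∧ ∃ c ∈ sideSupp φ S x u e y, ∃ c' ∈ sideSupp φ S x u e y,
      c' ≠ c ∧ φ u c ≠ 0 ∧ φ s c ≠ 0 ∧ φ s c' ≠ 0 := by
  obtain ⟨c, hc, huc⟩ := h.exists_left_common hy hye
  have hdeg : 2 ≤ C.deg u := by
    have := h.three_le_w_left hy hye hyf
    unfold Config.adjw at hu
    omega
  obtain ⟨s, hus, hsx⟩ := Config.exists_adj_ne_of_two_le_deg hdeg x
  have hsS : s ∈ S := h.ball (.cons h.adj hus.toWalk) (by simp)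
  have hside : OnSide C.graph x u s := .of_adj hus h.adj.ne' hsx
  have hsc : φ s c ≠ 0 := by
    obtain ⟨a, hua, hsa⟩ := h.semi.exists_of_adj h.left_mem hsS hus
    have ha : a ∈ ({c, e, f} : Finset (Fin N)) := h.supp_left_eq hyf hu hc huc ▸ mem_supp.2 hua
    simp only [Finset.mem_insert, Finset.mem_singleton] at ha
    rcases ha with rfl | rfl | rfl
    · exact hsa
    · exact absurd (h.apply_eq_zero_of_onSide hsS hside hus.ne' h.e_right) hsa
    · exact absurd (h.apply_eq_zero_of_onSide hsS hside hus.ne' h.f_right) hsa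
  obtain ⟨c', hc', hc'c, hsc'⟩ :=
    h.exists_next_common hy (.cons h.adj hus.toWalk) (by simp) hside hus.ne' hc hsc
  exact ⟨s, hus, hsx, c, hc, c', hc', hc'c, huc, hsc, hsc'⟩

theorem exists_third_common (h : IsFold C φ S x u u' e f) (hy : y ∉ S) (hus : C.graph.Adj u s)
    (hsx : s ≠ x) (hs : C.adjw s ≤ 0) (hc' : c' ∈ sideSupp φ S x u e y) (hcc' : c' ≠ c)
    (huc : φ u c ≠ 0) (hsc : φ s c ≠ 0) (hsc' : φ s c' ≠ 0) :
    ∃ c'' ∈ sideSupp φ S x u e y, c'' ≠ c ∧ c'' ≠ c' := by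
  have hsS : s ∈ S := h.ball (.cons h.adj hus.toWalk) (by simp)
  have hsupp : supp (φ s) = {c, c'} := h.semi.supp_eq_pair h.lin hsS hs hcc'.symm hsc hsc'
  have hdeg : 2 ≤ C.deg s := by
    have hcard := h.semi.card_supp hsS
    rw [hsupp, Finset.card_pair hcc'.symm] at hcard
    unfold Config.adjw at hs
    omega
  obtain ⟨t, hst, htu⟩ := Config.exists_adj_ne_of_two_le_deg hdeg u
  have hut : ¬ C.graph.Adj u t := not_adj_of_adj_of_adj h.lin.2 hus hst
  have htx : t ≠ x := by rintro rfl; exact hut h.adj.symm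
  have hside : OnSide C.graph x u t :=
    (OnSide.of_adj hus h.adj.ne' hsx).trans (.of_adj hst hsx htx)
  have htS : t ∈ S := h.ball (.cons h.adj (.cons hus hst.toWalk)) (by simp)
  have htc : φ t c = 0 := by
    by_contra htc
    rcases h.semi.adj_or_adj_and_adj h.left_mem htS htu.symm huc htc with hadj | ⟨-, hxt⟩
    · exact hut hadj
    · exact htu (hside.eq_of_adj h.lin.2 h.adj hxt)
  have htc' : φ t c' ≠ 0 := by
    obtain ⟨a, hsa, hta⟩ := h.semi.exists_of_adj hsS htS hst
    have ha : a ∈ ({c, c'} : Finset (Fin N)) := hsupp ▸ mem_supp.2 hsa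
    rcases Finset.mem_insert.1 ha with rfl | ha
    · exact absurd htc hta
    · exact Finset.mem_singleton.1 ha ▸ hta
  obtain ⟨c'', hc'', hne, htc''⟩ :=
    h.exists_next_common hy (.cons h.adj (.cons hus hst.toWalk)) (by simp) hside htu hc' htc'
  exact ⟨c'', hc'', by rintro rfl; exact htc'' htc, hne⟩

theorem two_le_card_sideSupp (h : IsFold C φ S x u u' e f) (hy : y ∉ S) (hye : φ y e ≠ 0)
    (hyf : φ y f = 0) (hu : C.adjw u ≤ 1) : 2 ≤ (sideSupp φ S x u e y).card := by
  obtain ⟨s, -, -, c, hc, c', hc', hne, -⟩ := h.exists_second_common hy hye hyf hu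
  exact Finset.one_lt_card.2 ⟨c', hc', c, hc, hne⟩

theorem three_le_card_sideSupp (h : IsFold C φ S x u u' e f) (hy : y ∉ S) (hye : φ y e ≠ 0)
    (hyf : φ y f = 0) (hu : C.adjw u ≤ 1) (hs : ∀ s, C.graph.Adj u s → s ≠ x → C.adjw s ≤ 0) :
    3 ≤ (sideSupp φ S x u e y).card := by
  obtain ⟨s, hus, hsx, c, hc, c', hc', hne, huc, hsc, hsc'⟩ :=
    h.exists_second_common hy hye hyf hu
  obtain ⟨c'', hc'', hne', hne''⟩ :=
    h.exists_third_common hy hus hsx (hs s hus hsx) hc' hne huc hsc hsc'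
  exact Finset.two_lt_card.2 ⟨c, hc, c', hc', c'', hc'', hne.symm, hne'.symm, hne''.symm⟩

theorem three_le_card_add_card_sideSupp (h : IsFold C φ S x u u' e f)
    (huniq : ∀ z z', 1 < C.adjw z → 1 < C.adjw z' → z = z') (hy : y ∉ S) (hye : φ y e ≠ 0)
    (hyf : φ y f = 0) :
    3 ≤ (sideSupp φ S x u e y).card + (sideSupp φ S x u' e y).card := by
  have hone := h.one_le_card_sideSupp hy hye
  have hone' := h.symm.one_le_card_sideSupp hy hye
  rcases le_or_gt (C.adjw u) 1 with hu | hu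
  · have := h.two_le_card_sideSupp hy hye hyf hu
    omega
  · have hu' : C.adjw u' ≤ 1 := not_lt.1 fun hu' => h.ne (huniq u u' hu hu')
    have := h.symm.two_le_card_sideSupp hy hye hyf hu'
    omega

theorem apply_eq_zero_of_notMem (h : IsFold C φ S x u u' e f) (hle : ∀ z, C.adjw z ≤ 3)
    (huniq : ∀ z z', 1 < C.adjw z → 1 < C.adjw z' → z = z')
    (hpair : (∃ z, C.adjw z = 3) →
      ∀ z z', C.graph.Adj z z' → C.adjw z = 1 → C.adjw z' = 1 → False)
    (hy : y ∉ S) : φ y e = 0 := by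
  by_contra hye
  have hyf := h.apply_f_eq_zero hle huniq hy hye
  have hlt := h.card_sideSupp_add_lt hye hyf
  have hwy := h.lin.w_le y
  have hley := hle y
  have hlarge : 1 < C.adjw y := by
    have := h.three_le_card_add_card_sideSupp huniq hy hye hyf
    omega
  have hsmall : ∀ z ∈ S, C.adjw z ≤ 1 := fun z hz =>
    not_lt.1 fun hz' => hy (huniq y z hlarge hz' ▸ hz)
  have htwo := h.two_le_card_sideSupp hy hye hyf (hsmall u h.left_mem)
  have htwo' := h.symm.two_le_card_sideSupp hy hye hyf (hsmall u' h.symm.left_mem)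
  have hthree : C.adjw y = 3 := by omega
  have hu : C.adjw u = 1 := by
    have := h.three_le_w_left hy hye hyf
    have := h.lin.w_le u
    have := hsmall u h.left_mem
    omega
  have houter : ∀ s, C.graph.Adj u s → s ≠ x → C.adjw s ≤ 0 := by
    intro s hus _
    have hs := hsmall s (h.ball (.cons h.adj hus.toWalk) (by simp))
    have hs' : C.adjw s ≠ 1 := hpair ⟨y, hthree⟩ u s hus hu
    omega
  have := h.three_le_card_sideSupp hy hye hyf hu.le houter
  omega

end IsFold

namespace Config

variable {C : Config} {m l i : ℕ} {v : ℕ → C.V} {x z a : C.V}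

theorem IsBad.not_isLeaf (hx : C.IsBad x) : ¬ C.IsLeaf x := by
  obtain ⟨a, b, hab, hxa, hxb, -⟩ := hx
  exact fun hleaf => hab (hleaf.eq_of_adj hxa hxb)

theorem IsBad.adjw_ne_zero (hx : C.IsBad x) (hdeg : C.deg x ≤ 2) (hxa : C.graph.Adj x a) :
    C.adjw a ≠ 0 := by
  obtain ⟨b, b', hbb', hxb, hxb', hb, hb'⟩ := hx
  rcases eq_or_eq_of_adj hdeg hxb hxb' hbb' hxa with rfl | rfl
  exacts [hb.ne', hb'.ne']

theorem IsChain.reverse (h : C.IsChain m v) : C.IsChain m fun i => v (m - i) := by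
  refine ⟨fun i hi j hj hij => ?_, fun i hi => ?_⟩
  · have := h.1 (m - i) (by omega) (m - j) (by omega) hij
    omega
  · have hadj := h.2 (m - (i + 1)) (by omega)
    rw [show m - (i + 1) + 1 = m - i by omega] at hadj
    exact hadj.symm

theorem IsChain.exists_of_adj (h : C.IsChain m v) (hdeg : ∀ y, C.deg y ≤ 2) (hm : 0 < m)
    (hi : i ≤ m) (hfirst : i = 0 → C.IsLeaf (v 0)) (hlast : i = m → C.IsLeaf (v m))
    (hz : C.graph.Adj (v i) z) : ∃ j ≤ m, v j = z ∧ i ≤ j + 1 ∧ j ≤ i + 1 := by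
  rcases Nat.eq_zero_or_pos i with rfl | hpos
  · exact ⟨1, hm, (hfirst rfl).eq_of_adj (h.2 0 hm) hz, by omega, by omega⟩
  have hprev : C.graph.Adj (v i) (v (i - 1)) := by
    have hadj := h.2 (i - 1) (by omega)
    rw [Nat.sub_add_cancel hpos] at hadj
    exact hadj.symm
  rcases hi.eq_or_lt with rfl | hlt
  · exact ⟨i - 1, by omega, (hlast rfl).eq_of_adj hprev hz, by omega, by omega⟩
  have hne : v (i - 1) ≠ v (i + 1) := fun heq => by
    have := h.1 (i - 1) (by omega) (i + 1) hlt heq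
    omega
  rcases eq_or_eq_of_adj (hdeg _) hprev (h.2 i hlt) hne hz with rfl | rfl
  · exact ⟨i - 1, by omega, rfl, by omega, by omega⟩
  · exact ⟨i + 1, hlt, rfl, by omega, le_rfl⟩

namespace IsEBPCand

theorem reverse (h : C.IsEBPCand m v) : C.IsEBPCand m fun i => v (m - i) := by
  refine ⟨h.1.reverse, fun p hp mb vb hb i hi => ?_, by simpa using h.2.2.2, ?_⟩
  · obtain ⟨j, hj, hvj⟩ := h.2.1 p hp mb vb hb i hi
    exact ⟨m - j, by omega, by simpa [Nat.sub_sub_self hj] using hvj⟩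
  · refine h.2.2.1.imp (by simp) fun ⟨hm, h₁, h₂⟩ => ⟨hm, ?_, ?_⟩
    · simpa [Nat.sub_sub_self (show 1 ≤ m by omega)] using h₁
    · simpa [Nat.sub_sub_self hm] using h₂

theorem pos_and_isLeaf_or_four_le (h : C.IsEBPCand m v) (hdeg : ∀ y, C.deg y ≤ 2) (hl : l ≤ m)
    (hbad : C.IsBad (v l)) : 0 < l ∧ (C.IsLeaf (v 0) ∨ 4 ≤ l) := by
  rcases h.2.2.1 with hleaf | ⟨hm, h₁, h₂⟩
  · exact ⟨Nat.pos_of_ne_zero fun hl₀ => hbad.not_isLeaf (hl₀ ▸ hleaf), .inl hleaf⟩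
  have hne : ∀ i, C.adjw (v i) = 0 → ¬ C.graph.Adj (v l) (v i) := fun i hi hadj =>
    hbad.adjw_ne_zero (hdeg _) hadj hi
  suffices 4 ≤ l from ⟨by omega, .inr this⟩
  by_contra! hlt
  interval_cases l
  · exact hne 1 h₁ (h.1.2 0 (by omega))
  · exact hne 2 h₂ (h.1.2 1 (by omega))
  · exact hne 1 h₁ (h.1.2 1 (by omega)).symm
  · exact hne 2 h₂ (h.1.2 2 (by omega)).symm

theorem lt_and_isLeaf_or_add_four_le (h : C.IsEBPCand m v) (hdeg : ∀ y, C.deg y ≤ 2) (hl : l ≤ m)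
    (hbad : C.IsBad (v l)) : l < m ∧ (C.IsLeaf (v m) ∨ l + 4 ≤ m) := by
  have hbad' : C.IsBad (v (m - (m - l))) := by rwa [Nat.sub_sub_self hl]
  obtain ⟨hpos, hend⟩ := h.reverse.pos_and_isLeaf_or_four_le hdeg (Nat.sub_le m l) hbad'
  exact ⟨by omega, hend.imp (by simp) (by omega)⟩

theorem exists_eq_of_walk (h : C.IsEBPCand m v) (hdeg : ∀ y, C.deg y ≤ 2) (hl : l ≤ m)
    (hbad : C.IsBad (v l)) (p : C.graph.Walk z x) (hx : x = v l) (hp : p.length ≤ 4) :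
    ∃ i ≤ m, v i = z ∧ l ≤ i + p.length ∧ i ≤ l + p.length := by
  obtain ⟨hpos, hfront⟩ := h.pos_and_isLeaf_or_four_le hdeg hl hbad
  obtain ⟨hlt, hback⟩ := h.lt_and_isLeaf_or_add_four_le hdeg hl hbad
  induction p with
  | nil => exact ⟨l, hl, hx.symm, by omega, by omega⟩
  | cons hadj p ih =>
    rw [SimpleGraph.Walk.length_cons] at hp ⊢
    obtain ⟨i, hi, rfl, hli, hil⟩ := ih hx (by omega)
    obtain ⟨j, hj, hvj, hij, hji⟩ := h.1.exists_of_adj hdeg (by omega) hi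
      (fun hi₀ => hfront.resolve_right (by omega)) (fun him => hback.resolve_right (by omega))
      hadj.symm
    exact ⟨j, hj, hvj, by omega, by omega⟩

theorem mem_ebpSet_of_walk (h : C.IsEBPCand m v) (hdeg : ∀ y, C.deg y ≤ 2)
    (hpat : ∃ p ∈ badPatterns, ∃ mb vb, C.IsBadPartChain p mb vb) (hx : C.IsBad x)
    (p : C.graph.Walk x z) (hp : p.length ≤ 4) : z ∈ C.ebpSet m v := by
  obtain ⟨q, hq, mb, vb, hb⟩ := hpat
  obtain ⟨i, -, rfl⟩ := (hb.2.2.2 x).1 hx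
  obtain ⟨l, hl, hvl⟩ := h.2.1 q hq mb vb hb i (by have := hb.2.1; omega)
  obtain ⟨j, hj, hvj, -⟩ :=
    h.exists_eq_of_walk hdeg hl (hvl ▸ hx) p.reverse hvl.symm (by simpa using hp)
  exact ⟨j, hj, hvj⟩

end IsEBPCand

end Config

theorem statement11_general (C : Config) (hlin : C.IsLinear) (hle : ∀ z, C.adjw z ≤ 3)
    (huniq : ∀ z z', 1 < C.adjw z → 1 < C.adjw z' → z = z')
    (hpair : (∃ z, C.adjw z = 3) →
      ∀ z z', C.graph.Adj z z' → C.adjw z = 1 → C.adjw z' = 1 → False)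
    (N : ℕ) (φ : C.V → Fin N → ℤ) (hφ : C.IsEmbedding N φ) (x : C.V) (S : Set C.V)
    (hball : ∀ ⦃z⦄ (p : C.graph.Walk x z), p.length ≤ 4 → z ∈ S)
    (u₁ u₂ : C.V) (hu : u₁ ≠ u₂) (hxu₁ : C.graph.Adj x u₁) (hxu₂ : C.graph.Adj x u₂)
    (hss : C.IsSemiStandardAtOn N φ x S)
    (e : Fin N) (he₁ : φ u₁ e ≠ 0) (he₂ : φ u₂ e ≠ 0) (hex : φ x e = 0)
    (v : C.V) (hv₁ : v ≠ u₁) (hv₂ : v ≠ u₂) :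
    φ v e = 0 := by
  have hcard := hss.2 u₁ (hball hxu₁.toWalk (by simp)) u₂ (hball hxu₂.toWalk (by simp)) hu hxu₁ hxu₂
  obtain ⟨f, hf⟩ := Finset.card_pos.1 (hcard ▸ Nat.one_pos)
  obtain ⟨⟨hf₁, hfx⟩, hf₂⟩ : (φ u₁ f ≠ 0 ∧ φ x f ≠ 0) ∧ φ u₂ f ≠ 0 := by
    simpa only [Finset.mem_inter, mem_supp] using hf
  have hfold : IsFold C φ S x u₁ u₂ e f :=
    ⟨hlin, hφ, hss, hball, hxu₁, hxu₂, hu, he₁, he₂, hex, hf₁, hf₂, hfx⟩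
  by_cases hv : v ∈ S
  · exact hfold.apply_eq_zero_of_mem hv hv₁ hv₂
  · exact hfold.apply_eq_zero_of_notMem hle huniq hpair hv

/-- Lemma 5.10: the folded basis vector of a semi-standard embedding appears only in
the supports of the two neighbors of the bad vertex. -/
theorem statement11 (C : Config) (hlin : C.IsLinear) (hwc : C.WorkingConditions)
    (hbad : ∃ y : C.V, C.IsBad y) (N : ℕ) (φ : C.V → Fin N → ℤ)
    (hφ : C.IsEmbedding N φ) (m : ℕ) (vc : ℕ → C.V) (hebp : C.IsExtBadPart m vc)
    (x : C.V) (hx : C.IsBad x)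
    (u₁ u₂ : C.V) (hu : u₁ ≠ u₂) (hxu₁ : C.graph.Adj x u₁) (hxu₂ : C.graph.Adj x u₂)
    (hss : C.IsSemiStandardAtOn N φ x (C.ebpSet m vc))
    (e : Fin N) (he₁ : φ u₁ e ≠ 0) (he₂ : φ u₂ e ≠ 0) (hex : φ x e = 0)
    (v : C.V) (hv₁ : v ≠ u₁) (hv₂ : v ≠ u₂) :
    φ v e = 0 := by
  exact statement11_general C hlin hwc.2.1 hwc.2.2.1 hwc.2.2.2.2.1 N φ hφ x (C.ebpSet m vc)
    (fun _ p hp => hebp.1.mem_ebpSet_of_walk hlin.1 (hwc.2.2.2.2.2.2.2 hbad) hx p hp)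
    u₁ u₂ hu hxu₁ hxu₂ hss e he₁ he₂ hex v hv₁ hv₂

end LensPaper
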